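/- Let G be a strongly connected directed multigraph on n+1 vertices such that every vertex has indegree equal to outdegree equal to d ≥ 2 (multiple edges and self-loops allowed). Then for all vertices x and y, the expected hitting time of y from x by the simple random walk on G satisfies E_x[τ_y] ≤ (d/2)·n·(n+1). -/

import Mathlib

open scoped ENNReal Classical

/-- Finite-horizon iterates whose supremum is the expected hitting time of `S`
for the Markov chain with transition kernel `P`. -/
noncomputable def hitIter {V : Type*} (P : V → V → ℝ≥0∞) (S : Set V) : ℕ → V → ℝ≥0∞
  | 0 => fun _ => 0
  | (m + 1) => fun x => if x ∈ S then 0 else 1 + ∑' z, P x z * hitIter P S m z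

/-- Expected hitting time `E_x[τ_S]` of the set `S`, started from `x`, defined as the
minimal nonnegative solution of the hitting-time equations (supremum of iterates). -/
noncomputable def hitExp {V : Type*} (P : V → V → ℝ≥0∞) (S : Set V) (x : V) : ℝ≥0∞ :=
  ⨆ m, hitIter P S m x

/-- Outdegree of `x` in a directed multigraph given by edge multiplicities `E`. -/
def outdeg {V : Type*} [Fintype V] (E : V → V → ℕ) (x : V) : ℕ := ∑ y, E x y

/-- Indegree of `x`. -/
def indeg {V : Type*} [Fintype V] (E : V → V → ℕ) (x : V) : ℕ := ∑ y, E y x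

/-- Transition kernel of the simple random walk on the multigraph `E`. -/
noncomputable def stepP {V : Type*} [Fintype V] (E : V → V → ℕ) (x y : V) : ℝ≥0∞ :=
  (E x y : ℝ≥0∞) / (outdeg E x : ℝ≥0∞)

/-- Expected return time `E_i[τ_i⁺]` of the simple random walk on `E`. -/
noncomputable def retExp {V : Type*} [Fintype V] (E : V → V → ℕ) (i : V) : ℝ≥0∞ :=
  1 + ∑' z, stepP E i z * hitExp (stepP E) {i} z


theorem gap_bound {V : Type*} [Fintype V] (d : ℕ) (E : V → V → ℕ)
    (hout : ∀ x : V, outdeg E x = d)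
    (hin : ∀ x : V, indeg E x = d)
    (hsc : ∀ x y : V, Relation.ReflTransGen (fun a b => 0 < E a b) x y)
    (f : V → ℝ) (y : V)
    (hf : ∀ x, x ≠ y → (d : ℝ) * f x ≤ d + ∑ z, (E x z : ℝ) * f z)
    (A : Finset V) (hyA : y ∉ A) (hA : A.Nonempty) (s t : ℝ) (hst : s ≤ t)
    (h1 : ∀ x ∈ A, t ≤ f x) (h0 : ∀ x ∉ A, f x ≤ s) : t - s ≤ d * A.card := by
  have hin' : ∀ x, ∑ z, (E z x : ℝ) = d := by
    intro x; have := hin x; unfold indeg at this; exact_mod_cast this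
  have hout' : ∀ x, ∑ z, (E x z : ℝ) = d := by
    intro x; have := hout x; unfold outdeg at this; exact_mod_cast this
  have hsplit : ∀ g : V → ℝ, ∑ z, g z = ∑ z ∈ A, g z + ∑ z ∈ Aᶜ, g z := fun g =>
    (Finset.sum_add_sum_compl A g).symm
  have e1 : ∑ x ∈ A, (d : ℝ) * f x
      = ∑ x ∈ A, ∑ z ∈ A, (E z x : ℝ) * f x + ∑ x ∈ A, ∑ z ∈ Aᶜ, (E z x : ℝ) * f x := by
    rw [← Finset.sum_add_distrib]
    refine Finset.sum_congr rfl fun x _ => ?_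
    rw [← hsplit, ← Finset.sum_mul, hin']
  have e2 : ∑ x ∈ A, (d : ℝ) * f x ≤ d * A.card + (∑ x ∈ A, ∑ z ∈ A, (E x z : ℝ) * f z
      + ∑ x ∈ A, ∑ z ∈ Aᶜ, (E x z : ℝ) * f z) := by
    have : ∑ x ∈ A, (d : ℝ) * f x ≤ ∑ x ∈ A, ((d : ℝ) + ∑ z, (E x z : ℝ) * f z) :=
      Finset.sum_le_sum fun x hx => hf x (fun h => hyA (h ▸ hx))
    refine this.trans (le_of_eq ?_)
    rw [← Finset.sum_add_distrib, Finset.sum_add_distrib]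
    congr 1
    · simp [mul_comm]
    · exact Finset.sum_congr rfl fun x _ => hsplit _
  have e3 : ∑ x ∈ A, ∑ z ∈ A, (E z x : ℝ) * f x = ∑ x ∈ A, ∑ z ∈ A, (E x z : ℝ) * f z :=
    Finset.sum_comm
  have e4 : (∑ x ∈ A, ∑ z ∈ Aᶜ, (E z x : ℝ)) = ∑ x ∈ A, ∑ z ∈ Aᶜ, (E x z : ℝ) := by
    have a1 : ∑ x ∈ A, (d : ℝ)
        = ∑ x ∈ A, ∑ z ∈ A, (E z x : ℝ) + ∑ x ∈ A, ∑ z ∈ Aᶜ, (E z x : ℝ) := by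
      rw [← Finset.sum_add_distrib]
      exact Finset.sum_congr rfl fun x _ => by rw [← hsplit, hin']
    have a2 : ∑ x ∈ A, (d : ℝ)
        = ∑ x ∈ A, ∑ z ∈ A, (E x z : ℝ) + ∑ x ∈ A, ∑ z ∈ Aᶜ, (E x z : ℝ) := by
      rw [← Finset.sum_add_distrib]
      exact Finset.sum_congr rfl fun x _ => by rw [← hsplit, hout']
    have a3 : ∑ x ∈ A, ∑ z ∈ A, (E z x : ℝ) = ∑ x ∈ A, ∑ z ∈ A, (E x z : ℝ) :=
      Finset.sum_comm
    linarith
  have e5 : (∑ x ∈ A, ∑ z ∈ Aᶜ, (E z x : ℝ)) * t ≤ ∑ x ∈ A, ∑ z ∈ Aᶜ, (E z x : ℝ) * f x := by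
    simp_rw [Finset.sum_mul]
    exact Finset.sum_le_sum fun x hx => Finset.sum_le_sum fun z _ =>
      mul_le_mul_of_nonneg_left (h1 x hx) (Nat.cast_nonneg _)
  have e6 : ∑ x ∈ A, ∑ z ∈ Aᶜ, (E x z : ℝ) * f z ≤ (∑ x ∈ A, ∑ z ∈ Aᶜ, (E x z : ℝ)) * s := by
    simp_rw [Finset.sum_mul]
    exact Finset.sum_le_sum fun x _ => Finset.sum_le_sum fun z hz =>
      mul_le_mul_of_nonneg_left (h0 z (Finset.mem_compl.1 hz)) (Nat.cast_nonneg _)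
  have e7 : (1 : ℝ) ≤ ∑ x ∈ A, ∑ z ∈ Aᶜ, (E x z : ℝ) := by
    obtain ⟨a, ha⟩ := hA
    have key : ∃ u ∈ A, ∃ v ∉ A, 0 < E u v := by
      by_contra! hcon
      have : ∀ b, Relation.ReflTransGen (fun a b => 0 < E a b) a b → b ∈ A := by
        intro b hb
        induction hb with
        | refl => exact ha
        | tail _ h2 ih =>
          by_contra hn
          have := hcon _ ih _ hn
          omega
      exact hyA (this y (hsc a y))
    obtain ⟨u, hu, v, hv, huv⟩ := key
    have b1 : (1 : ℝ) ≤ E u v := by exact_mod_cast huv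
    have b2 : (E u v : ℝ) ≤ ∑ z ∈ Aᶜ, (E u z : ℝ) :=
      Finset.single_le_sum (f := fun z => (E u z : ℝ)) (fun _ _ => Nat.cast_nonneg _)
        (Finset.mem_compl.2 hv)
    have b3 : ∑ z ∈ Aᶜ, (E u z : ℝ) ≤ ∑ x ∈ A, ∑ z ∈ Aᶜ, (E x z : ℝ) :=
      Finset.single_le_sum (f := fun x => ∑ z ∈ Aᶜ, (E x z : ℝ))
        (fun _ _ => Finset.sum_nonneg fun _ _ => Nat.cast_nonneg _) hu
    linarith
  rw [e4] at e5
  nlinarith [mul_nonneg (sub_nonneg.2 e7) (sub_nonneg.2 hst)]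

theorem sub_bound {V : Type*} [Fintype V] (n d : ℕ)
    (hcard : Fintype.card V = n + 1) (E : V → V → ℕ)
    (hout : ∀ x : V, outdeg E x = d)
    (hin : ∀ x : V, indeg E x = d)
    (hsc : ∀ x y : V, Relation.ReflTransGen (fun a b => 0 < E a b) x y)
    (f : V → ℝ) (y : V) (hy : f y = 0)
    (hf : ∀ x, x ≠ y → (d : ℝ) * f x ≤ d + ∑ z, (E x z : ℝ) * f z) :
    ∀ k : ℕ, ∀ x, (Finset.univ.filter fun v => f x ≤ f v)ᶜ.card = k →
      2 * f x ≤ d * ((n : ℝ) * (n + 1) - (Finset.univ.filter fun v => f x ≤ f v).card *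
        ((Finset.univ.filter fun v => f x ≤ f v).card - 1)) := by
  intro k
  induction k using Nat.strong_induction_on with
  | _ k ih =>
    intro x hk
    have hd0 : (0 : ℝ) ≤ d := Nat.cast_nonneg d
    set A := Finset.univ.filter fun v => f x ≤ f v with hAdef
    have hxA : x ∈ A := by simp [hAdef]
    have hle : A.card ≤ n + 1 := hcard ▸ Finset.card_le_univ A
    have hle' : (A.card : ℝ) ≤ n + 1 := by exact_mod_cast hle
    have hpos : (1 : ℝ) ≤ A.card := by exact_mod_cast Finset.card_pos.2 ⟨x, hxA⟩
    by_cases hx0 : f x ≤ 0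
    · have : (0 : ℝ) ≤ d * ((n : ℝ) * (n + 1) - A.card * (A.card - 1)) :=
        mul_nonneg hd0 (by nlinarith)
      linarith
    push Not at hx0
    have hyA : y ∉ A := by simp [hAdef, hy, hx0]
    obtain ⟨w, hw, hmax⟩ := Finset.exists_max_image Aᶜ f ⟨y, Finset.mem_compl.2 hyA⟩
    have hwx : f w < f x := by simpa [hAdef] using hw
    have hgap := gap_bound d E hout hin hsc f y hf A hyA ⟨x, hxA⟩ (f w) (f x) hwx.le
      (fun v hv => by simpa [hAdef] using hv) (fun v hv => hmax v (Finset.mem_compl.2 hv))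
    set B := Finset.univ.filter fun v => f w ≤ f v with hBdef
    have hAB : A ⊂ B := by
      refine Finset.ssubset_iff_subset_ne.2 ⟨fun v hv => ?_, fun h => ?_⟩
      · have : f x ≤ f v := by simpa [hAdef] using hv
        simpa [hBdef] using hwx.le.trans this
      · exact (Finset.mem_compl.1 hw) (h ▸ by simp [hBdef])
    have hc := Finset.card_lt_card hAB
    have hB := ih Bᶜ.card (by
      rw [← hk]; exact Finset.card_lt_card (Finset.compl_ssubset_compl.2 hAB)) w rfl
    rw [← hBdef] at hB
    have hc' : (A.card : ℝ) + 1 ≤ B.card := by exact_mod_cast hc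
    have : (d : ℝ) * ((A.card + 1) * A.card) ≤ d * (B.card * (B.card - 1)) :=
      mul_le_mul_of_nonneg_left (by nlinarith) hd0
    nlinarith

theorem hitIter_mono_succ {V : Type*} (P : V → V → ℝ≥0∞) (S : Set V) (m : ℕ) :
    ∀ x, hitIter P S m x ≤ hitIter P S (m + 1) x := by
  induction m with
  | zero => intro x; simp [hitIter]
  | succ m ih =>
    intro x
    rw [hitIter, hitIter]
    beta_reduce
    split_ifs
    · exact le_rfl
    · exact add_le_add le_rfl (ENNReal.tsum_le_tsum fun z => mul_le_mul_right (ih z) _)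

/-- General upper bound: on a strongly connected multigraph on `n+1` vertices with
all in- and out-degrees equal to `d ≥ 2`, every expected hitting time is at most
`(d/2)·n·(n+1)`. -/
theorem general_hitting_time_bound
    {V : Type*} [Fintype V] (n d : ℕ) (hd : 2 ≤ d)
    (hcard : Fintype.card V = n + 1)
    (E : V → V → ℕ)
    (hout : ∀ x : V, outdeg E x = d)
    (hin : ∀ x : V, indeg E x = d)
    (hsc : ∀ x y : V, Relation.ReflTransGen (fun a b => 0 < E a b) x y) :
    ∀ x y : V, hitExp (stepP E) {y} x ≤ ((d * n * (n + 1) : ℕ) : ℝ≥0∞) / 2 := by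
  intro x y
  have hdpos : (0 : ℝ) < d := by exact_mod_cast (by omega : 0 < d)
  have hP : ∀ a b, stepP E a b ≠ ⊤ := by
    intro a b
    unfold stepP
    rw [hout]
    exact ENNReal.div_ne_top (ENNReal.natCast_ne_top _) (by exact_mod_cast (by omega : d ≠ 0))
  have hfin : ∀ m a, hitIter (stepP E) {y} m a ≠ ⊤ := by
    intro m
    induction m with
    | zero => intro a; simp [hitIter]
    | succ m ih =>
      intro a
      rw [hitIter]
      beta_reduce
      split_ifs
      · simp
      · rw [tsum_fintype]
        exact ENNReal.add_ne_top.2 ⟨by simp, ENNReal.sum_ne_top.2 fun z _ =>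
          ENNReal.mul_ne_top (hP a z) (ih z)⟩
  unfold hitExp
  refine iSup_le fun m => (hitIter_mono_succ _ _ m x).trans ?_
  set f : V → ℝ := fun a => (hitIter (stepP E) {y} (m + 1) a).toReal with hfdef
  have hy : f y = 0 := by simp [hfdef, hitIter]
  have hf : ∀ a, a ≠ y → (d : ℝ) * f a ≤ d + ∑ z, (E a z : ℝ) * f z := by
    intro a ha
    have h1 : hitIter (stepP E) {y} (m + 1) a
        ≤ 1 + ∑ z, stepP E a z * hitIter (stepP E) {y} (m + 1) z := by
      refine (hitIter_mono_succ _ _ (m + 1) a).trans (le_of_eq ?_)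
      rw [hitIter]
      beta_reduce
      rw [if_neg (by simpa using ha), tsum_fintype]
    have hs : ∑ z, stepP E a z * hitIter (stepP E) {y} (m + 1) z ≠ ⊤ :=
      ENNReal.sum_ne_top.2 fun z _ => ENNReal.mul_ne_top (hP a z) (hfin _ z)
    have h2 := ENNReal.toReal_mono (ENNReal.add_ne_top.2 ⟨by simp, hs⟩) h1
    rw [ENNReal.toReal_add (by simp) hs, ENNReal.toReal_sum
      (fun z _ => ENNReal.mul_ne_top (hP a z) (hfin _ z))] at h2
    have h3 : f a ≤ 1 + (∑ z, (E a z : ℝ) * f z) / d := by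
      refine h2.trans (le_of_eq ?_)
      rw [Finset.sum_div]
      simp only [ENNReal.toReal_one]
      congr 1
      refine Finset.sum_congr rfl fun z _ => ?_
      rw [ENNReal.toReal_mul]
      simp only [stepP, hout, ENNReal.toReal_div, ENNReal.toReal_natCast, hfdef]
      ring
    calc (d : ℝ) * f a ≤ d * (1 + (∑ z, (E a z : ℝ) * f z) / d) :=
          mul_le_mul_of_nonneg_left h3 hdpos.le
      _ = _ := by field_simp
  have hb := sub_bound n d hcard E hout hin hsc f y hy hf _ x rfl
  have hpos : (1 : ℝ) ≤ (Finset.univ.filter fun v => f x ≤ f v).card := by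
    exact_mod_cast Finset.card_pos.2 ⟨x, by simp⟩
  have hb2 : f x ≤ (d * n * (n + 1) : ℝ) / 2 := by
    have := mul_nonneg hdpos.le (mul_nonneg (zero_le_one.trans hpos) (sub_nonneg.2 hpos))
    linarith
  rw [← ENNReal.toReal_le_toReal (hfin _ _)
    (ENNReal.div_ne_top (ENNReal.natCast_ne_top _) (by simp))]
  rw [ENNReal.toReal_div, ENNReal.toReal_natCast]
  push_cast
  simpa using hb2
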